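/- arXiv:1410.2623 — 2 statements merged into one kernel-verified Lean document; each statement's English description precedes it below -/
import Mathlib

section
/- Let f(q) = q + ∑_{n=2}^∞ q^n a_n be a quaternionic power series converging on B(0;1) with Re[f'(q)] > 0 for all q ∈ B(0;1). Then (1 - ‖q‖)/(1 + ‖q‖) ≤ Re[f'(q)] ≤ ‖f'(q)‖ ≤ (1 + ‖q‖)/(1 - ‖q‖) for all q ∈ B(0;1). -/
namespace CarathAux

open Filter Topology

def Good (c : ℕ → ℂ) : Prop := ∀ r : ℝ, 0 ≤ r → r < 1 → Summable (fun n => ‖c n‖ * r ^ n)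

theorem Good.summable {c : ℕ → ℂ} (h : Good c) {z : ℂ} (hz : ‖z‖ < 1) :
    Summable (fun n => c n * z ^ n) := by
  apply Summable.of_norm
  simpa using h ‖z‖ (norm_nonneg _) hz

theorem Good.diff {c : ℕ → ℂ} (h : Good c) :
    DifferentiableOn ℂ (fun z => ∑' n, c n * z ^ n) (Metric.ball 0 1) := by
  intro z hz
  rw [mem_ball_zero_iff] at hz
  obtain ⟨r, hr1, hr2⟩ := exists_between hz
  have h0 : 0 ≤ r := (norm_nonneg z).trans hr1.le
  have := Complex.differentiableOn_tsum_of_summable_norm (F := fun n z => c n * z ^ n)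
    (U := Metric.ball 0 r) (h r h0 hr2) (fun i => by fun_prop) Metric.isOpen_ball
    (fun i w hw => by
      rw [mem_ball_zero_iff] at hw
      rw [norm_mul, norm_pow]
      gcongr)
  exact (this.differentiableAt (Metric.isOpen_ball.mem_nhds (by simpa using hr1))).differentiableWithinAt

theorem schwarz {c : ℕ → ℂ} (h : Good c) (h0 : c 0 = 1)
    (hp : ∀ z : ℂ, ‖z‖ < 1 → 0 < (∑' n, c n * z ^ n).re) {z : ℂ} (hz : ‖z‖ < 1) :
    ‖(∑' n, c n * z ^ n) - 1‖ ≤ ‖z‖ * ‖(∑' n, c n * z ^ n) + 1‖ := by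
  set F : ℂ → ℂ := fun z => ∑' n, c n * z ^ n with hF
  have hne : ∀ z : ℂ, ‖z‖ < 1 → F z + 1 ≠ 0 := by
    intro z hz h
    have := congrArg Complex.re h
    have h2 := hp z hz
    simp at this
    simp only [hF] at this
    linarith
  have hF0 : F 0 = 1 := by
    simp only [hF]
    rw [tsum_eq_single 0 (fun n hn => by simp [hn])]
    simp [h0]
  have hd : DifferentiableOn ℂ (fun z => (F z - 1) / (F z + 1)) (Metric.ball 0 1) := by
    apply DifferentiableOn.div
    · exact h.diff.sub_const 1
    · exact h.diff.add_const 1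
    · intro z hz
      exact hne z (by simpa using hz)
  have := Complex.norm_le_norm_of_mapsTo_ball hd (fun w hw => by
    rw [mem_ball_zero_iff] at hw
    rw [mem_closedBall_zero_iff, norm_div, div_le_one (norm_pos_iff.2 (hne w hw))]
    have h2 : 0 < (F w).re := hp w hw
    rw [← sq_le_sq₀ (norm_nonneg _) (norm_nonneg _), Complex.sq_norm, Complex.sq_norm,
      Complex.normSq_apply, Complex.normSq_apply]
    simp
    nlinarith) (by simp [hF0]) hz
  rwa [norm_div, div_le_iff₀ (norm_pos_iff.2 (hne z hz))] at this

theorem lower {w : ℂ} {r : ℝ} (hr0 : 0 ≤ r) (hr : r < 1) (hw : 0 < w.re)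
    (h : ‖w - 1‖ ≤ r * ‖w + 1‖) : (1 - r) / (1 + r) ≤ w.re := by
  rw [← sq_le_sq₀ (norm_nonneg _) (by positivity), mul_pow, Complex.sq_norm, Complex.sq_norm,
      Complex.normSq_apply, Complex.normSq_apply] at h
  simp at h
  have h1 : r ^ 2 ≤ 1 := by nlinarith
  have h2 : (1 - w.re) ^ 2 ≤ (r * (w.re + 1)) ^ 2 := by nlinarith [sq_nonneg w.im]
  have h3 := abs_le_of_sq_le_sq' h2 (by positivity)
  rw [div_le_iff₀ (by positivity)]
  nlinarith [h3.2]

theorem coeff_one {c : ℕ → ℂ} (h : Good c) (h0 : c 0 = 1)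
    (hp : ∀ z : ℂ, ‖z‖ < 1 → 0 < (∑' n, c n * z ^ n).re) : ‖c 1‖ ≤ 2 := by
  have hg : Good (fun n => c (n + 1)) := by
    intro r hr0 hr
    rcases hr0.eq_or_lt with rfl | hr0'
    · exact summable_of_ne_finset_zero (s := {0}) (fun n hn => by
        simp at hn; simp [hn])
    · have := ((summable_nat_add_iff 1).2 (h r hr0 hr)).mul_right r⁻¹
      refine this.congr fun n => ?_
      field_simp
      ring
  have hcK : ContinuousAt (fun z => ∑' n, c (n + 1) * z ^ n) (0 : ℂ) :=
    (hg.diff.differentiableAt (Metric.isOpen_ball.mem_nhds (by simp))).continuousAt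
  have hcF : ContinuousAt (fun z => ∑' n, c n * z ^ n) (0 : ℂ) :=
    (h.diff.differentiableAt (Metric.isOpen_ball.mem_nhds (by simp))).continuousAt
  have e0 : ∀ d : ℕ → ℂ, ∑' n, d n * (0 : ℂ) ^ n = d 0 := by
    intro d
    rw [tsum_eq_single 0 (fun n hn => by simp [hn])]
    simp
  unfold ContinuousAt at hcK hcF
  beta_reduce at hcK hcF
  rw [e0] at hcF
  rw [e0 (fun n => c (n + 1))] at hcK
  have t1 := (hcK.mono_left (nhdsWithin_le_nhds (s := {0}ᶜ))).norm
  have t2 := ((hcF.mono_left (nhdsWithin_le_nhds (s := {0}ᶜ))).add_const 1).norm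
  have := le_of_tendsto_of_tendsto t1 t2 (by
    have hb : ∀ᶠ z : ℂ in 𝓝[≠] 0, z ∈ Metric.ball (0 : ℂ) 1 :=
      nhdsWithin_le_nhds (Metric.isOpen_ball.mem_nhds (by simp))
    filter_upwards [hb, self_mem_nhdsWithin] with z hz hz0
    rw [mem_ball_zero_iff] at hz
    have hz0' : 0 < ‖z‖ := norm_pos_iff.2 hz0
    have hs := schwarz h h0 hp hz
    have e : (∑' n, c n * z ^ n) - 1 = z * ∑' n, c (n + 1) * z ^ n := by
      rw [(h.summable hz).tsum_eq_zero_add, ← tsum_mul_left]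
      simp only [h0, pow_zero, mul_one, add_sub_cancel_left]
      congr 1; ext n; ring
    rw [e, norm_mul] at hs
    exact le_of_mul_le_mul_left hs hz0')
  rw [h0] at this
  norm_num at this
  exact this

theorem coeff {c : ℕ → ℂ} (h : Good c) (h0 : c 0 = 1)
    (hp : ∀ z : ℂ, ‖z‖ < 1 → 0 < (∑' n, c n * z ^ n).re) (n : ℕ) (hn : n ≠ 0) : ‖c n‖ ≤ 2 := by
  have inj : Function.Injective (fun k : ℕ => n * k) := fun a b hab =>
    Nat.eq_of_mul_eq_mul_left (Nat.pos_of_ne_zero hn) hab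
  have hg : Good (fun k => c (n * k)) := by
    intro r hr0 hr
    have hs := h (r ^ ((n : ℝ)⁻¹)) (by positivity) (Real.rpow_lt_one hr0 hr (by positivity))
    refine (hs.comp_injective inj).congr fun k => ?_
    simp only [Function.comp]
    rw [pow_mul, Real.rpow_inv_natCast_pow hr0 hn]
  have := coeff_one hg (by simpa using h0) (fun w hw => by
    obtain ⟨z, rfl⟩ : ∃ z : ℂ, z ^ n = w := IsAlgClosed.exists_pow_nat_eq w (Nat.pos_of_ne_zero hn)
    have hz : ‖z‖ < 1 := by
      rw [norm_pow] at hw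
      exact (pow_lt_one_iff_of_nonneg (norm_nonneg _) hn).1 hw
    have hω := Complex.isPrimitiveRoot_exp n hn
    set ω := Complex.exp (2 * Real.pi * Complex.I / n)
    have hω1 : ‖ω‖ = 1 := hω.norm'_eq_one hn
    have hnm : ∀ j : ℕ, ‖ω ^ j * z‖ < 1 := fun j => by simpa [hω1] using hz
    have key : (n : ℂ) * ∑' k, c (n * k) * (z ^ n) ^ k
        = ∑ j ∈ Finset.range n, ∑' k, c k * (ω ^ j * z) ^ k := by
      rw [← Summable.tsum_finsetSum (fun j _ => h.summable (hnm j))]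
      rw [← tsum_mul_left]
      rw [← inj.tsum_eq (f := fun k => ∑ j ∈ Finset.range n, c k * (ω ^ j * z) ^ k)]
      · congr 1; ext k
        have : ∀ j : ℕ, c (n * k) * (ω ^ j * z) ^ (n * k) = c (n * k) * (z ^ n) ^ k := by
          intro j
          rw [mul_pow, ← pow_mul, show j * (n * k) = n * (j * k) by ring, pow_mul, hω.pow_eq_one,
            one_pow, one_mul, pow_mul]
        simp [this]
      · intro k hk
        by_contra hcon
        apply hk
        have hnd : ¬ n ∣ k := fun ⟨m, hm⟩ => hcon ⟨m, hm.symm⟩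
        have h1 : ω ^ k ≠ 1 := fun h => hnd ((hω.pow_eq_one_iff_dvd k).1 h)
        have : ∀ j : ℕ, c k * (ω ^ j * z) ^ k = c k * z ^ k * (ω ^ k) ^ j := by
          intro j
          rw [mul_pow, ← pow_mul, ← pow_mul, mul_comm j k]; ring
        simp only [this]
        rw [← Finset.mul_sum, geom_sum_eq h1, ← pow_mul, mul_comm k n, pow_mul, hω.pow_eq_one]
        simp
    have k2 := congrArg Complex.re key
    rw [Complex.re_sum] at k2
    have k3 : 0 < ∑ j ∈ Finset.range n, (∑' k, c k * (ω ^ j * z) ^ k).re :=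
      Finset.sum_pos (fun j _ => hp _ (hnm j)) (by simpa using hn)
    rw [← k2] at k3
    have : ((n : ℂ) * ∑' k, c (n * k) * (z ^ n) ^ k).re
        = n * (∑' k, c (n * k) * (z ^ n) ^ k).re := by simp
    rw [this] at k3
    exact pos_of_mul_pos_right k3 (by positivity))
  simpa using this

open Quaternion

/-- Complex projection of a quaternion associated with the unit `I`. -/
noncomputable def proj (I b : ℍ[ℝ]) : ℂ := ⟨b.re, -(I * b).re⟩

theorem re_zero_of_sq (I : ℍ[ℝ]) (hI : I * I = -1) : I.re = 0 := by
  have h0 := congrArg QuaternionAlgebra.re hI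
  have h1 := congrArg QuaternionAlgebra.imI hI
  have h2 := congrArg QuaternionAlgebra.imJ hI
  have h3 := congrArg QuaternionAlgebra.imK hI
  simp at h0 h1 h2 h3
  · by_contra hne
    have e1 : I.imI = 0 := by
      apply mul_left_cancel₀ hne; linarith
    have e2 : I.imJ = 0 := by
      apply mul_left_cancel₀ hne; linarith
    have e3 : I.imK = 0 := by
      apply mul_left_cancel₀ hne; linarith
    rw [e1, e2, e3] at h0
    nlinarith [mul_self_nonneg I.re]

theorem norm_lift (I : ℍ[ℝ]) (hI : I * I = -1) (z : ℂ) : ‖Complex.liftAux I hI z‖ = ‖z‖ := by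
  have h0 := congrArg QuaternionAlgebra.re hI
  have hre := re_zero_of_sq I hI
  simp at h0
  rw [hre] at h0
  rw [← sq_eq_sq₀ (norm_nonneg _) (norm_nonneg _), Complex.sq_norm, sq,
    ← Quaternion.normSq_eq_norm_mul_self, Quaternion.normSq_def', Complex.liftAux_apply,
    Complex.normSq_apply]
  simp [hre]
  linear_combination (-z.im ^ 2) * h0

theorem re_lift_mul (I : ℍ[ℝ]) (hI : I * I = -1) (z : ℂ) (b : ℍ[ℝ]) :
    (Complex.liftAux I hI z * b).re = (z * proj I b).re := by
  rw [Complex.liftAux_apply]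
  simp [proj]
  ring

theorem proj_lift (I : ℍ[ℝ]) (hI : I * I = -1) (z : ℂ) :
    proj I (Complex.liftAux I hI z) = z := by
  have e : ∀ w : ℂ, (Complex.liftAux I hI w).re = w.re := by
    intro w
    rw [Complex.liftAux_apply]
    simp [re_zero_of_sq I hI]
  apply Complex.ext
  · simp only [proj, e]
  · have : I * Complex.liftAux I hI z = Complex.liftAux I hI (Complex.I * z) := by
      rw [map_mul, Complex.liftAux_apply_I]
    simp only [proj]
    rw [this, e]
    simp

theorem abs_re_le (x : ℍ[ℝ]) : |x.re| ≤ ‖x‖ := by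
  apply abs_le_of_sq_le_sq _ (norm_nonneg _)
  rw [sq ‖x‖, ← Quaternion.normSq_eq_norm_mul_self, Quaternion.normSq_def']
  nlinarith [sq_nonneg x.imI, sq_nonneg x.imJ, sq_nonneg x.imK]

theorem norm_proj_le (I : ℍ[ℝ]) (hI : I * I = -1) (b : ℍ[ℝ]) : ‖proj I b‖ ≤ 2 * ‖b‖ := by
  have hI1 : ‖I‖ = 1 := by
    have := norm_lift I hI Complex.I
    simpa using this
  have h1 := Complex.norm_le_abs_re_add_abs_im (proj I b)
  have h2 := abs_re_le b
  have h3 := abs_re_le (I * b)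
  rw [norm_mul, hI1, one_mul] at h3
  simp only [proj, abs_neg] at h1 ⊢
  linarith

theorem exists_unit (q : ℍ[ℝ]) : ∃ (I : ℍ[ℝ]) (hI : I * I = -1) (z : ℂ),
    ‖z‖ = ‖q‖ ∧ q = Complex.liftAux I hI z := by
  obtain ⟨I, hI, z, h⟩ : ∃ (I : ℍ[ℝ]) (hI : I * I = -1) (z : ℂ), q = Complex.liftAux I hI z := by
    by_cases h : q.im = 0
    · refine ⟨((Complex.I : ℂ) : ℍ[ℝ]), by ext <;> simp, ⟨q.re, 0⟩, ?_⟩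
      rw [Complex.liftAux_apply]
      have h1 := congrArg QuaternionAlgebra.imI h
      have h2 := congrArg QuaternionAlgebra.imJ h
      have h3 := congrArg QuaternionAlgebra.imK h
      simp at h1 h2 h3
      ext <;> simp [*]
    · have hn : ‖q.im‖ ≠ 0 := by simpa using h
      refine ⟨‖q.im‖⁻¹ • q.im, ?_, ⟨q.re, ‖q.im‖⟩, ?_⟩
      · have : q.im * q.im = -((‖q.im‖ * ‖q.im‖ : ℝ) : ℍ[ℝ]) := by
          rw [← Quaternion.normSq_eq_norm_mul_self, ← Quaternion.im_sq, sq]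
        rw [smul_mul_smul_comm, this, ← Quaternion.coe_neg, ← Quaternion.coe_smul]
        rw [show (-1 : ℍ[ℝ]) = ((-1 : ℝ) : ℍ[ℝ]) by simp]
        congr 1
        simp; field_simp
      · rw [Complex.liftAux_apply, smul_smul, mul_inv_cancel₀ hn, one_smul]
        ext <;> simp
  exact ⟨I, hI, z, by rw [h, norm_lift], h⟩

theorem main (b : ℕ → ℍ[ℝ]) (hb0 : b 0 = 1)
    (hs : ∀ q : ℍ[ℝ], ‖q‖ < 1 → Summable (fun n => q ^ n * b n))
    (hp : ∀ q : ℍ[ℝ], ‖q‖ < 1 → 0 < (∑' n, q ^ n * b n).re) (q : ℍ[ℝ]) (hq : ‖q‖ < 1) :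
    (1 - ‖q‖) / (1 + ‖q‖) ≤ (∑' n, q ^ n * b n).re ∧
      (∑' n, q ^ n * b n).re ≤ ‖∑' n, q ^ n * b n‖ ∧
      ‖∑' n, q ^ n * b n‖ ≤ (1 + ‖q‖) / (1 - ‖q‖) := by
  have hsn : ∀ r : ℝ, 0 ≤ r → r < 1 → Summable (fun n => ‖b n‖ * r ^ n) := by
    intro r hr0 hr
    have := (hs (r : ℍ[ℝ]) (by simpa [abs_of_nonneg hr0] using hr)).norm
    refine this.congr fun n => ?_
    rw [norm_mul, norm_pow, Quaternion.norm_coe, Real.norm_of_nonneg hr0, mul_comm]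
  have good : ∀ I : ℍ[ℝ], I * I = -1 → Good (fun n => proj I (b n)) := by
    intro I hI r hr0 hr
    refine Summable.of_nonneg_of_le (fun n => by positivity) (fun n => ?_)
      ((hsn r hr0 hr).mul_left 2)
    rw [← mul_assoc]
    gcongr
    exact norm_proj_le I hI _
  have c0 : ∀ I : ℍ[ℝ], I * I = -1 → proj I (b 0) = 1 := by
    intro I hI
    have := proj_lift I hI 1
    rwa [map_one, ← hb0] at this
  have hre : ∀ (I : ℍ[ℝ]) (hI : I * I = -1) (z : ℂ), ‖z‖ < 1 →
      (∑' n, proj I (b n) * z ^ n).re = (∑' n, (Complex.liftAux I hI z) ^ n * b n).re := by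
    intro I hI z hz
    have h1 := Complex.hasSum_re ((good I hI).summable hz).hasSum
    have h2 := (hs (Complex.liftAux I hI z) (by rwa [norm_lift])).hasSum.map
      (QuaternionAlgebra.reₗ (-1 : ℝ) 0 (-1)) Quaternion.continuous_re
    refine h1.unique (h2.congr_fun fun n => ?_)
    change (proj I (b n) * z ^ n).re = ((Complex.liftAux I hI) z ^ n * b n).re
    rw [← map_pow, re_lift_mul, mul_comm]
  have hpI : ∀ (I : ℍ[ℝ]) (hI : I * I = -1) (z : ℂ), ‖z‖ < 1 →
      0 < (∑' n, proj I (b n) * z ^ n).re := by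
    intro I hI z hz
    rw [hre I hI z hz]
    exact hp _ (by rwa [norm_lift])
  have hbn : ∀ n, n ≠ 0 → ‖b n‖ ≤ 2 := by
    intro n hn
    obtain ⟨I, hI, z, hz, e⟩ := exists_unit (b n)
    have := coeff (good I hI) (c0 I hI) (hpI I hI) n hn
    rwa [e, proj_lift, hz] at this
  refine ⟨?_, ?_, ?_⟩
  · obtain ⟨I, hI, z, hz, e⟩ := exists_unit q
    have hz1 : ‖z‖ < 1 := by rwa [hz]
    have := lower (norm_nonneg z) hz1 (hpI I hI z hz1)
      (schwarz (good I hI) (c0 I hI) (hpI I hI) hz1)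
    rwa [hre I hI z hz1, ← e, hz] at this
  · exact (le_abs_self _).trans (abs_re_le _)
  · have hg := (hasSum_geometric_of_lt_one (norm_nonneg q) hq)
    have hn : Summable (fun n => ‖q ^ n * b n‖) := (hs q hq).norm
    calc ‖∑' n, q ^ n * b n‖ ≤ ∑' n, ‖q ^ n * b n‖ := norm_tsum_le_tsum_norm hn
      _ = 1 + ∑' n, ‖q ^ (n + 1) * b (n + 1)‖ := by
        rw [hn.tsum_eq_zero_add]; simp [hb0]
      _ ≤ 1 + ∑' n, 2 * ‖q‖ * ‖q‖ ^ n := by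
        gcongr 1 + ?_
        refine Summable.tsum_le_tsum (fun n => ?_) ((summable_nat_add_iff 1).2 hn)
          (hg.summable.mul_left _)
        rw [norm_mul, norm_pow, pow_succ]
        have := mul_le_mul_of_nonneg_left (hbn (n + 1) (by simp))
          (show 0 ≤ ‖q‖ ^ n * ‖q‖ by positivity)
        linarith
      _ = (1 + ‖q‖) / (1 - ‖q‖) := by
        rw [tsum_mul_left, hg.tsum_eq]
        have : 1 - ‖q‖ ≠ 0 := by linarith
        field_simp
        ring

end CarathAux


/-- Carathéodory-type distortion estimate: if `f(q) = q + ∑_{n≥2} qⁿ aₙ` converges on the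
unit ball and `Re f'(q) > 0` there, then
`(1-‖q‖)/(1+‖q‖) ≤ Re f'(q) ≤ ‖f'(q)‖ ≤ (1+‖q‖)/(1-‖q‖)`. -/
theorem stmt2 (a : ℕ → Quaternion ℝ) (ha0 : a 0 = 0) (ha1 : a 1 = 1)
    (hconv : ∀ q : Quaternion ℝ, ‖q‖ < 1 → Summable (fun n : ℕ => q ^ n * a n))
    (hconv' : ∀ q : Quaternion ℝ, ‖q‖ < 1 →
      Summable (fun n : ℕ => (n : ℝ) • (q ^ (n - 1) * a n)))
    (hpos : ∀ q : Quaternion ℝ, ‖q‖ < 1 →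
      0 < (∑' n : ℕ, (n : ℝ) • (q ^ (n - 1) * a n)).re) :
    ∀ q : Quaternion ℝ, ‖q‖ < 1 →
      (1 - ‖q‖) / (1 + ‖q‖) ≤ (∑' n : ℕ, (n : ℝ) • (q ^ (n - 1) * a n)).re ∧
      (∑' n : ℕ, (n : ℝ) • (q ^ (n - 1) * a n)).re ≤
        ‖∑' n : ℕ, (n : ℝ) • (q ^ (n - 1) * a n)‖ ∧
      ‖∑' n : ℕ, (n : ℝ) • (q ^ (n - 1) * a n)‖ ≤ (1 + ‖q‖) / (1 - ‖q‖) := by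
  have hb : ∀ q : Quaternion ℝ, ‖q‖ < 1 →
      (∑' n : ℕ, (n : ℝ) • (q ^ (n - 1) * a n))
        = ∑' n : ℕ, q ^ n * (((n + 1 : ℕ) : ℝ) • a (n + 1)) := by
    intro q hq
    rw [(hconv' q hq).tsum_eq_zero_add]
    simp
  intro q hq
  rw [hb q hq]
  refine CarathAux.main (fun n => ((n + 1 : ℕ) : ℝ) • a (n + 1)) (by simp [ha1]) ?_ ?_ q hq
  · intro q hq
    refine ((summable_nat_add_iff 1).2 (hconv' q hq)).congr fun n => ?_
    simp
  · intro q hq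
    rw [← hb q hq]
    exact hpos q hq
end

section
/- Let f(q) = ∑_{k=1}^∞ q^k a_k and g(q) = ∑_{k=1}^∞ q^k b_k be quaternionic power series converging on B(0;1), and suppose there exists a power series w(q) = ∑ q^n c_n with all c_n real, converging on B(0;1), with w(0) = 0 and ‖w(q)‖ < 1 for all q ∈ B(0;1), such that f(q) = g(w(q)) on B(0;1). Then for every n ≥ 1: ∑_{k=1}^n ‖a_k‖² ≤ ∑_{k=1}^n ‖b_k‖² (Rogosinski's inequality). -/
/-- truncation of a power series -/
noncomputable def rogTr {R : Type} [CommRing R] (c : ℕ → R) (N : ℕ) : Polynomial R :=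
  ∑ n ∈ Finset.range N, Polynomial.C (c n) * Polynomial.X ^ n

theorem rogTr_coeff {R : Type} [CommRing R] (c : ℕ → R) (N k : ℕ) :
    (rogTr c N).coeff k = if k < N then c k else 0 := by
  simp [rogTr, Polynomial.finsetSum_coeff, Polynomial.coeff_X_pow]

theorem rogTr_eval {R : Type} [CommRing R] (c : ℕ → R) (N : ℕ) (x : R) :
    (rogTr c N).eval x = ∑ n ∈ Finset.range N, c n * x ^ n := by
  simp [rogTr, Polynomial.eval_finsetSum]

theorem rog_sum_support (p : Polynomial ℂ) (N : ℕ) (h : ∀ k, N ≤ k → p.coeff k = 0) :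
    ∑ i ∈ p.support, ‖p.coeff i‖ ^ 2 = ∑ i ∈ Finset.range N, ‖p.coeff i‖ ^ 2 := by
  apply Finset.sum_subset
  · intro i hi
    rw [Polynomial.mem_support_iff] at hi
    rw [Finset.mem_range]
    by_contra hh
    exact hi (h i (by omega))
  · intro i _ hi
    rw [Polynomial.notMem_support_iff] at hi
    simp [hi]

theorem rog_L1 (W H : Polynomial ℂ) (N : ℕ) (B : ℝ) (hB : ∀ z : ℂ, ‖z‖ = 1 → ‖W.eval z‖ ≤ B)
    (hH : ∀ k, N ≤ k → H.coeff k = 0) :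
    ∑ k ∈ Finset.range N, ‖(W * H).coeff k‖ ^ 2 ≤
      B ^ 2 * ∑ k ∈ Finset.range N, ‖H.coeff k‖ ^ 2 := by
  have h1 : ∑ k ∈ Finset.range N, ‖(W * H).coeff k‖ ^ 2 ≤
      ∑ i ∈ (W * H).support, ‖(W * H).coeff i‖ ^ 2 := by
    rw [rog_sum_support (W * H) (max N ((W * H).natDegree + 1))
      (fun k hk => Polynomial.coeff_eq_zero_of_natDegree_lt (by omega))]
    apply Finset.sum_le_sum_of_subset_of_nonneg
    · intro i; simp; omega
    · intros; positivity
  refine h1.trans ?_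
  rw [← rog_sum_support H N hH, Polynomial.sum_sq_norm_coeff_eq_circleAverage,
    Polynomial.sum_sq_norm_coeff_eq_circleAverage, ← smul_eq_mul (B ^ 2), ← Real.circleAverage_fun_smul]
  have hci : ∀ f : ℂ → ℝ, Continuous f → CircleIntegrable f 0 1 := fun f hf =>
    hf.continuousOn.circleIntegrable (by norm_num)
  apply Real.circleAverage_mono
  · exact hci _ (by fun_prop)
  · exact hci _ (by fun_prop)
  · intro z hz
    have hz1 : ‖z‖ = 1 := by simpa using hz
    simp only [Polynomial.eval_mul, norm_mul, smul_eq_mul, mul_pow]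
    gcongr
    exact hB z hz1

theorem rog_tail (c : ℕ → ℝ)
    (hs : ∀ z : ℂ, ‖z‖ < 1 → Summable (fun n : ℕ => (c n : ℂ) * z ^ n))
    (hl : ∀ z : ℂ, ‖z‖ < 1 → ‖∑' n : ℕ, (c n : ℂ) * z ^ n‖ ≤ 1)
    (r : ℝ) (hr0 : 0 < r) (hr1 : r < 1) (N : ℕ) (ε : ℝ) (hε : 0 < ε) :
    ∃ M, N ≤ M ∧ ∀ z : ℂ, ‖z‖ = 1 →
      ‖(rogTr (fun n => ((c n * r ^ n : ℝ) : ℂ)) M).eval z‖ ≤ 1 + ε := by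
  have hsr := (hs (r : ℂ) (by simpa [abs_of_pos hr0] using hr1)).norm
  have ht := tendsto_sum_nat_add (fun n => ‖(c n : ℂ) * (r : ℂ) ^ n‖)
  obtain ⟨M, hM, hNM⟩ := ((ht.eventually (gt_mem_nhds hε)).and
    (Filter.eventually_ge_atTop N)).exists
  refine ⟨M, hNM, fun z hz => ?_⟩
  have hrz : ‖(r : ℂ) * z‖ < 1 := by simpa [abs_of_pos hr0, hz] using hr1
  have e := (hs _ hrz).sum_add_tsum_nat_add M
  rw [rogTr_eval]
  have e1 : ∑ n ∈ Finset.range M, ((c n * r ^ n : ℝ) : ℂ) * z ^ n =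
      ∑ n ∈ Finset.range M, (c n : ℂ) * ((r : ℂ) * z) ^ n := by
    apply Finset.sum_congr rfl; intros; push_cast; ring
  have hnn : ∀ n, ‖(c n : ℂ) * ((r : ℂ) * z) ^ n‖ = ‖(c n : ℂ) * (r : ℂ) ^ n‖ := by
    intro n; simp [hz, mul_pow]
  rw [e1, eq_sub_of_add_eq e]
  refine (norm_sub_le _ _).trans (add_le_add (hl _ hrz) ?_)
  refine (norm_tsum_le_tsum_norm ?_).trans ?_
  · exact (summable_nat_add_iff M).2 (hs _ hrz).norm
  · simp only [hnn]; exact hM.le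

theorem rog_L2 (c : ℕ → ℝ)
    (hs : ∀ z : ℂ, ‖z‖ < 1 → Summable (fun n : ℕ => (c n : ℂ) * z ^ n))
    (hl : ∀ z : ℂ, ‖z‖ < 1 → ‖∑' n : ℕ, (c n : ℂ) * z ^ n‖ ≤ 1)
    (N : ℕ) (h : Polynomial ℝ) :
    ∑ k ∈ Finset.range N, ((rogTr c N * h).coeff k) ^ 2 ≤
      ∑ k ∈ Finset.range N, (h.coeff k) ^ 2 := by
  have key : ∀ r : ℝ, 0 < r → r < 1 →
      ∑ k ∈ Finset.range N, (r ^ k * (rogTr c N * h).coeff k) ^ 2 ≤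
      (1 + (1 - r)) ^ 2 * ∑ k ∈ Finset.range N, (h.coeff k) ^ 2 := by
    intro r hr0 hr1
    obtain ⟨M, hNM, hM⟩ := rog_tail c hs hl r hr0 hr1 N (1 - r) (by linarith)
    have := rog_L1 _ (rogTr (fun n => ((h.coeff n * r ^ n : ℝ) : ℂ)) N) N _ hM
      (fun k hk => by rw [rogTr_coeff, if_neg (by omega)])
    calc _ = _ := ?_
      _ ≤ _ := this
      _ ≤ _ := ?_
    · apply Finset.sum_congr rfl
      intro k hk
      rw [Finset.mem_range] at hk
      rw [← sq_abs, ← Real.norm_eq_abs, ← Complex.norm_real]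
      congr 2
      rw [Polynomial.coeff_mul, Polynomial.coeff_mul, Finset.mul_sum]
      push_cast
      apply Finset.sum_congr rfl
      rintro ⟨i, j⟩ hij
      rw [Finset.HasAntidiagonal.mem_antidiagonal] at hij
      simp only at hij ⊢
      rw [rogTr_coeff, rogTr_coeff, rogTr_coeff, if_pos (by omega), if_pos (by omega),
        if_pos (by omega), ← hij]
      push_cast
      ring
    · refine mul_le_mul_of_nonneg_left (Finset.sum_le_sum fun k hk => ?_) (by positivity)
      rw [Finset.mem_range] at hk
      rw [rogTr_coeff, if_pos hk, Complex.norm_real, Real.norm_eq_abs, sq_abs, mul_pow]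
      have : (r ^ k) ^ 2 ≤ 1 := pow_le_one₀ (by positivity) (pow_le_one₀ hr0.le hr1.le)
      nlinarith [sq_nonneg (h.coeff k)]
  have t1 : Filter.Tendsto (fun r : ℝ =>
      ∑ k ∈ Finset.range N, (r ^ k * (rogTr c N * h).coeff k) ^ 2) (nhdsWithin 1 (Set.Iio 1))
      (nhds (∑ k ∈ Finset.range N, ((1:ℝ) ^ k * (rogTr c N * h).coeff k) ^ 2)) := by
    apply Filter.Tendsto.mono_left _ nhdsWithin_le_nhds
    apply Continuous.tendsto (f := fun r : ℝ =>
      ∑ k ∈ Finset.range N, (r ^ k * (rogTr c N * h).coeff k) ^ 2)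
    fun_prop
  have t2 : Filter.Tendsto (fun r : ℝ =>
      (1 + (1 - r)) ^ 2 * ∑ k ∈ Finset.range N, (h.coeff k) ^ 2) (nhdsWithin 1 (Set.Iio 1))
      (nhds ((1 + (1 - (1:ℝ))) ^ 2 * ∑ k ∈ Finset.range N, (h.coeff k) ^ 2)) := by
    apply Filter.Tendsto.mono_left _ nhdsWithin_le_nhds
    apply Continuous.tendsto (f := fun r : ℝ =>
      (1 + (1 - r)) ^ 2 * ∑ k ∈ Finset.range N, (h.coeff k) ^ 2)
    fun_prop
  have := le_of_tendsto_of_tendsto t1 t2 (by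
    filter_upwards [Ioo_mem_nhdsLT (show (0:ℝ) < 1 by norm_num)] with r hr
    exact key r hr.1 hr.2)
  simpa using this

theorem rog_L3 (c : ℕ → ℝ) (hc0 : c 0 = 0)
    (hs : ∀ z : ℂ, ‖z‖ < 1 → Summable (fun n : ℕ => (c n : ℂ) * z ^ n))
    (hl : ∀ z : ℂ, ‖z‖ < 1 → ‖∑' n : ℕ, (c n : ℂ) * z ^ n‖ ≤ 1)
    (N : ℕ) (D : ℕ) : ∀ (G : Polynomial ℝ), (∀ k, D ≤ k → G.coeff k = 0) →
    ∑ k ∈ Finset.range N, ((G.comp (rogTr c N)).coeff k) ^ 2 ≤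
      ∑ k ∈ Finset.range D, (G.coeff k) ^ 2 := by
  induction D with
  | zero =>
    intro G hG
    have : G = 0 := by ext k; simpa using hG k
    simp [this]
  | succ D ih =>
    intro G hG
    have h1 := ih G.divX (fun k hk => by
      rw [Polynomial.coeff_divX]; exact hG _ (by omega))
    have h2 := rog_L2 c hs hl N (G.divX.comp (rogTr c N))
    have e : G.comp (rogTr c N) = rogTr c N * (G.divX.comp (rogTr c N)) +
        Polynomial.C (G.coeff 0) := by
      have e0 := congrArg (fun p => p.comp (rogTr c N)) (Polynomial.divX_mul_X_add G)
      simp only [Polynomial.add_comp, Polynomial.mul_comp, Polynomial.X_comp,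
        Polynomial.C_comp] at e0
      rw [← e0, mul_comm]
    rw [Finset.sum_range_succ']
    simp only [Polynomial.coeff_divX] at h1
    have h3 : ∑ k ∈ Finset.range N, ((G.comp (rogTr c N)).coeff k) ^ 2 ≤
      ∑ k ∈ Finset.range N, ((rogTr c N * (G.divX.comp (rogTr c N))).coeff k) ^ 2
        + G.coeff 0 ^ 2 := by
      cases N with
      | zero => simp; positivity
      | succ N =>
        rw [e, Finset.sum_range_succ', Finset.sum_range_succ' (n := N)]
        have : (rogTr c (N + 1)).coeff 0 = 0 := by rw [rogTr_coeff]; simp [hc0]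
        simp [this, Polynomial.coeff_C]
    linarith

theorem rog_B (s : ℕ → ℝ) (hs : ∀ t : ℝ, |t| < 1 → Summable (fun k => s k * t ^ k)) (N : ℕ) :
    (fun t : ℝ => ∑' k, s k * t ^ k - (rogTr s N).eval t) =O[nhds 0] (fun t : ℝ => t ^ N) := by
  have h2 := hs (1/2) (by rw [abs_of_pos] <;> norm_num)
  have h2' := ((summable_nat_add_iff N).2 h2).norm
  apply Asymptotics.IsBigO.of_bound ((2:ℝ) ^ N * ∑' k, ‖s (k + N) * (1/2 : ℝ) ^ (k + N)‖)
  filter_upwards [Metric.ball_mem_nhds (0:ℝ) (show (0:ℝ) < 1/2 by norm_num)] with t ht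
  have ht' : |t| < 1/2 := by simpa using ht
  have e := (hs t (by linarith)).sum_add_tsum_nat_add N
  rw [rogTr_eval, ← e, add_sub_cancel_left]
  have hb : ∀ k, ‖s (k + N) * t ^ (k + N)‖ ≤
      (2 ^ N * ‖t ^ N‖) * ‖s (k + N) * (1/2 : ℝ) ^ (k + N)‖ := by
    intro k
    simp only [norm_mul, norm_pow, Real.norm_eq_abs]
    rw [abs_of_pos (show (0:ℝ) < 1/2 by norm_num), pow_add, pow_add]
    have h3 : |t| ^ k ≤ (1/2) ^ k := pow_le_pow_left₀ (abs_nonneg _) ht'.le _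
    have h4 : (2:ℝ) ^ N * (1/2) ^ N = 1 := by rw [← mul_pow]; norm_num
    calc _ = |s (k+N)| * |t| ^ N * |t| ^ k := by ring
      _ ≤ |s (k+N)| * |t| ^ N * (1/2) ^ k := by gcongr
      _ = |s (k+N)| * |t| ^ N * (1/2) ^ k * (2 ^ N * (1/2) ^ N) := by rw [h4, mul_one]
      _ = _ := by ring
  refine (norm_tsum_le_tsum_norm ?_).trans ?_
  · exact (summable_nat_add_iff N).2 (hs t (by linarith)).norm
  · refine (Summable.tsum_le_tsum hb ?_ (h2'.mul_left _)).trans ?_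
    · exact (summable_nat_add_iff N).2 (hs t (by linarith)).norm
    · rw [tsum_mul_left]; apply le_of_eq; ring

theorem rog_poly (Q : Polynomial ℝ) (N : ℕ)
    (h : (fun t : ℝ => Q.eval t) =O[nhds 0] (fun t : ℝ => t ^ N)) :
    ∀ j, j ≤ N → Polynomial.X ^ j ∣ Q := by
  intro j
  induction j with
  | zero => simp
  | succ j ih =>
    intro hj
    obtain ⟨S, hS⟩ := ih (by omega)
    have h0 : S.eval 0 = 0 := by
      obtain ⟨K, hK⟩ := h.bound
      have ht : Filter.Tendsto (fun t : ℝ => ‖S.eval t‖) (nhdsWithin 0 {0}ᶜ) (nhds ‖S.eval 0‖) :=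
        Filter.Tendsto.mono_left
          (Continuous.tendsto (f := fun t : ℝ => ‖S.eval t‖) (by fun_prop) 0) nhdsWithin_le_nhds
      have ht2 : Filter.Tendsto (fun t : ℝ => K * ‖t‖ ^ (N - j)) (nhdsWithin 0 {0}ᶜ)
          (nhds (K * ‖(0:ℝ)‖ ^ (N - j))) :=
        Filter.Tendsto.mono_left
          (Continuous.tendsto (f := fun t : ℝ => K * ‖t‖ ^ (N - j)) (by fun_prop) 0)
          nhdsWithin_le_nhds
      have := le_of_tendsto_of_tendsto ht ht2 (by
        filter_upwards [self_mem_nhdsWithin, nhdsWithin_le_nhds hK] with t ht0 htK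
        have hp : 0 < ‖t‖ ^ j := by have : 0 < ‖t‖ := norm_pos_iff.2 ht0
                                    positivity
        rw [hS] at htK
        simp only [Polynomial.eval_mul, Polynomial.eval_pow, Polynomial.eval_X, norm_mul,
          norm_pow] at htK
        have e : ‖t‖ ^ N = ‖t‖ ^ j * ‖t‖ ^ (N - j) := by rw [← pow_add]; congr 1; omega
        rw [e] at htK
        refine le_of_mul_le_mul_left (htK.trans (le_of_eq ?_)) hp
        ring)
      rw [norm_zero, zero_pow (by omega), mul_zero] at this
      exact norm_le_zero_iff.1 this
    obtain ⟨T, hT⟩ := Polynomial.dvd_iff_isRoot.2 h0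
    refine ⟨T, ?_⟩
    rw [hS, hT]
    simp [pow_succ, mul_assoc]

theorem rog_L4 (α β c : ℕ → ℝ) (hc0 : c 0 = 0)
    (hα : ∀ t : ℝ, |t| < 1 → Summable (fun k => α k * t ^ k))
    (hβ : ∀ t : ℝ, |t| < 1 → Summable (fun k => β k * t ^ k))
    (hc : ∀ t : ℝ, |t| < 1 → Summable (fun k => c k * t ^ k))
    (hsub : ∀ t : ℝ, |t| < 1 →
      ∑' k, α k * t ^ k = ∑' k, β k * (∑' n, c n * t ^ n) ^ k) (N : ℕ) :
    ∀ k, k < N → α k = ((rogTr β N).comp (rogTr c N)).coeff k := by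
  intro k hk
  set w : ℝ → ℝ := fun t => ∑' n, c n * t ^ n with hw
  have w1 : w =O[nhds 0] (fun t : ℝ => t) := by
    have := rog_B c hc 1
    simpa [rogTr_eval, hc0] using this
  have wt : Filter.Tendsto w (nhds 0) (nhds 0) := w1.trans_tendsto Filter.tendsto_id
  have Pt : Filter.Tendsto (fun t => (rogTr c N).eval t) (nhds 0) (nhds 0) := by
    have := Continuous.tendsto (f := fun t => (rogTr c N).eval t) (by fun_prop) 0
    have h0 : (rogTr c N).eval 0 = 0 := by
      rw [← Polynomial.coeff_zero_eq_eval_zero, rogTr_coeff]; simp [hc0]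
    simpa [h0] using this
  have b1 := rog_B α hα N
  have b2 := ((rog_B β hβ N).comp_tendsto wt).trans (w1.pow N)
  have b3 := rog_B c hc N
  have b4 : (fun t => (rogTr β N).eval (w t) - (rogTr β N).eval ((rogTr c N).eval t))
      =O[nhds 0] (fun t : ℝ => t ^ N) := by
    have := ((rogTr β N).hasStrictDerivAt (0:ℝ)).hasStrictFDerivAt.isBigO_sub
    have h := this.comp_tendsto (wt.prodMk_nhds Pt)
    exact h.trans b3
  have b5 := rog_poly (rogTr α N - (rogTr β N).comp (rogTr c N)) N (by
    refine ((b2.add b4).sub b1).congr' ?_ Filter.EventuallyEq.rfl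
    filter_upwards [Metric.ball_mem_nhds (0:ℝ) (show (0:ℝ) < 1 by norm_num)] with t ht
    have := hsub t (by simpa using ht)
    simp only [Function.comp_apply, Polynomial.eval_sub, Polynomial.eval_comp]
    rw [this]
    ring) N le_rfl
  have := Polynomial.X_pow_dvd_iff.1 b5 k hk
  rw [Polynomial.coeff_sub, rogTr_coeff, if_pos hk] at this
  linarith

theorem rog_real (α β c : ℕ → ℝ) (hc0 : c 0 = 0)
    (hs : ∀ z : ℂ, ‖z‖ < 1 → Summable (fun n : ℕ => (c n : ℂ) * z ^ n))
    (hl : ∀ z : ℂ, ‖z‖ < 1 → ‖∑' n : ℕ, (c n : ℂ) * z ^ n‖ ≤ 1)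
    (hα : ∀ t : ℝ, |t| < 1 → Summable (fun k => α k * t ^ k))
    (hβ : ∀ t : ℝ, |t| < 1 → Summable (fun k => β k * t ^ k))
    (hc : ∀ t : ℝ, |t| < 1 → Summable (fun k => c k * t ^ k))
    (hsub : ∀ t : ℝ, |t| < 1 →
      ∑' k, α k * t ^ k = ∑' k, β k * (∑' n, c n * t ^ n) ^ k) (N : ℕ) :
    ∑ k ∈ Finset.range N, α k ^ 2 ≤ ∑ k ∈ Finset.range N, β k ^ 2 := by
  have h := rog_L3 c hc0 hs hl N N (rogTr β N)
    (fun k hk => by rw [rogTr_coeff, if_neg (by omega)])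
  calc _ = _ := ?_
    _ ≤ _ := h
    _ = _ := ?_
  · apply Finset.sum_congr rfl
    intro k hk
    rw [rog_L4 α β c hc0 hα hβ hc hsub N k (Finset.mem_range.1 hk)]
  · apply Finset.sum_congr rfl
    intro k hk
    rw [rogTr_coeff, if_pos (Finset.mem_range.1 hk)]

theorem rog_comp (φ : Quaternion ℝ →ₗ[ℝ] ℝ) (hφ : Continuous φ)
    (a b : ℕ → Quaternion ℝ)
    (hfa : ∀ q : Quaternion ℝ, ‖q‖ < 1 → Summable (fun k : ℕ => q ^ k * a k))
    (hgb : ∀ q : Quaternion ℝ, ‖q‖ < 1 → Summable (fun k : ℕ => q ^ k * b k))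
    (c : ℕ → ℝ) (hc0 : c 0 = 0)
    (hw : ∀ q : Quaternion ℝ, ‖q‖ < 1 → Summable (fun n : ℕ => c n • q ^ n))
    (hwlt : ∀ q : Quaternion ℝ, ‖q‖ < 1 → ‖∑' n : ℕ, c n • q ^ n‖ < 1)
    (hsub : ∀ q : Quaternion ℝ, ‖q‖ < 1 →
      (∑' k : ℕ, q ^ k * a k) = ∑' k : ℕ, (∑' n : ℕ, c n • q ^ n) ^ k * b k) (N : ℕ) :
    ∑ k ∈ Finset.range N, φ (a k) ^ 2 ≤ ∑ k ∈ Finset.range N, φ (b k) ^ 2 := by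
  have hemb : ∀ z : ℂ, ‖(z : Quaternion ℝ)‖ = ‖z‖ := by
    intro z
    have h1 : ‖(z : Quaternion ℝ)‖ ^ 2 = ‖z‖ ^ 2 := by
      rw [sq, ← Quaternion.normSq_eq_norm_mul_self, Quaternion.normSq_def', Complex.sq_norm,
        Complex.normSq_apply]
      simp; ring
    exact (pow_left_inj₀ (norm_nonneg _) (norm_nonneg _) (by norm_num)).1 h1
  -- the projection of the quaternions to the complex plane
  let π : Quaternion ℝ →ₗ[ℝ] ℂ :=
    { toFun := fun q => ⟨q.re, q.imI⟩
      map_add' := fun x y => by apply Complex.ext <;> simp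
      map_smul' := fun r x => by apply Complex.ext <;> simp }
  have hπ : Continuous π := π.continuous_of_finiteDimensional
  have hcont : Continuous (Quaternion.ofComplex : ℂ → Quaternion ℝ) :=
    Quaternion.ofComplex.toLinearMap.continuous_of_finiteDimensional
  have hterm : ∀ (z : ℂ) (n : ℕ), Quaternion.ofComplex ((c n : ℂ) * z ^ n) =
      c n • (z : Quaternion ℝ) ^ n := by
    intro z n
    have : (c n : ℂ) * z ^ n = c n • z ^ n := by simp
    rw [this, map_smul, map_pow, Quaternion.coe_ofComplex]
  have hπc : ∀ z : ℂ, π (Quaternion.ofComplex z) = z := fun z => rfl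
  have hs : ∀ z : ℂ, ‖z‖ < 1 → Summable (fun n : ℕ => (c n : ℂ) * z ^ n) := by
    intro z hz
    have h := (hw z (by rwa [hemb])).map π hπ
    refine h.congr fun n => ?_
    rw [Function.comp_apply, ← hterm, hπc]
  have hl : ∀ z : ℂ, ‖z‖ < 1 → ‖∑' n : ℕ, (c n : ℂ) * z ^ n‖ ≤ 1 := by
    intro z hz
    have h := ((hs z hz).hasSum.map Quaternion.ofComplex hcont).tsum_eq
    have h2 := hwlt z (by rwa [hemb])
    have h3 : (fun n => c n • (z : Quaternion ℝ) ^ n) =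
        Quaternion.ofComplex ∘ (fun n : ℕ => (c n : ℂ) * z ^ n) := by
      funext n; exact (hterm z n).symm
    rw [h3, h, Quaternion.coe_ofComplex, hemb] at h2
    exact h2.le
  have hqt : ∀ (t : ℝ) (k : ℕ) (x : Quaternion ℝ),
      φ ((t : Quaternion ℝ) ^ k * x) = φ x * t ^ k := by
    intro t k x
    rw [← Quaternion.coe_pow, Quaternion.coe_mul_eq_smul, map_smul, smul_eq_mul, mul_comm]
  have hnt : ∀ t : ℝ, |t| < 1 → ‖(t : Quaternion ℝ)‖ < 1 := by
    intro t ht; simpa using ht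
  have hsum : ∀ u : ℕ → Quaternion ℝ,
      (∀ q : Quaternion ℝ, ‖q‖ < 1 → Summable (fun k : ℕ => q ^ k * u k)) →
      ∀ t : ℝ, |t| < 1 →
        HasSum (fun k => φ (u k) * t ^ k) (φ (∑' k, (t : Quaternion ℝ) ^ k * u k)) := by
    intro u hu t ht
    have h := (hu t (hnt t ht)).hasSum.map φ hφ
    have e : (fun k => φ (u k) * t ^ k) = φ ∘ (fun k => (t : Quaternion ℝ) ^ k * u k) := by
      funext k; exact (hqt t k _).symm
    rw [e]; exact h
  have hct : ∀ t : ℝ, (fun n => c n • (t : Quaternion ℝ) ^ n) =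
      fun n => ((c n * t ^ n : ℝ) : Quaternion ℝ) := by
    intro t; funext n
    rw [← Quaternion.coe_pow, Quaternion.coe_mul, Quaternion.coe_mul_eq_smul]
  have hc : ∀ t : ℝ, |t| < 1 → Summable (fun k => c k * t ^ k) := by
    intro t ht
    have h := hw t (hnt t ht)
    rw [hct] at h
    exact Quaternion.summable_coe.1 h
  have hwt : ∀ t : ℝ, ∑' n, c n • (t : Quaternion ℝ) ^ n =
      ((∑' n, c n * t ^ n : ℝ) : Quaternion ℝ) := by
    intro t
    rw [hct, Quaternion.tsum_coe]
  refine rog_real (fun k => φ (a k)) (fun k => φ (b k)) c hc0 hs hl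
    (fun t ht => (hsum a hfa t ht).summable) (fun t ht => (hsum b hgb t ht).summable) hc ?_ N
  intro t ht
  have h1 := hwlt t (hnt t ht)
  rw [hwt, Quaternion.norm_coe, Real.norm_eq_abs] at h1
  rw [(hsum a hfa t ht).tsum_eq, (hsum b hgb _ h1).tsum_eq, hsub t (hnt t ht), hwt]

/-- Rogosinski's inequality: if `f(q) = ∑_{k≥1} qᵏ aₖ`, `g(q) = ∑_{k≥1} qᵏ bₖ` converge on
the unit ball and `f = g ∘ w` for a power series `w` with real coefficients, `w(0) = 0`,
`‖w(q)‖ < 1` on the ball, then `∑_{k=1}^n ‖aₖ‖² ≤ ∑_{k=1}^n ‖bₖ‖²` for all `n ≥ 1`. -/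
theorem stmt14 (a b : ℕ → Quaternion ℝ) (ha0 : a 0 = 0) (hb0 : b 0 = 0)
    (hfa : ∀ q : Quaternion ℝ, ‖q‖ < 1 → Summable (fun k : ℕ => q ^ k * a k))
    (hgb : ∀ q : Quaternion ℝ, ‖q‖ < 1 → Summable (fun k : ℕ => q ^ k * b k))
    (c : ℕ → ℝ) (hc0 : c 0 = 0)
    (hw : ∀ q : Quaternion ℝ, ‖q‖ < 1 → Summable (fun n : ℕ => c n • q ^ n))
    (hwlt : ∀ q : Quaternion ℝ, ‖q‖ < 1 → ‖∑' n : ℕ, c n • q ^ n‖ < 1)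
    (hsub : ∀ q : Quaternion ℝ, ‖q‖ < 1 →
      (∑' k : ℕ, q ^ k * a k) = ∑' k : ℕ, (∑' n : ℕ, c n • q ^ n) ^ k * b k) :
    ∀ n : ℕ, 1 ≤ n →
      ∑ k ∈ Finset.Icc 1 n, ‖a k‖ ^ 2 ≤ ∑ k ∈ Finset.Icc 1 n, ‖b k‖ ^ 2 := by
  intro n _
  have H := fun (φ : Quaternion ℝ →ₗ[ℝ] ℝ) =>
    rog_comp φ φ.continuous_of_finiteDimensional a b hfa hgb c hc0 hw hwlt hsub (n + 1)
  have h1 : ∑ k ∈ Finset.range (n + 1), (a k).re ^ 2 ≤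
      ∑ k ∈ Finset.range (n + 1), (b k).re ^ 2 :=
    H { toFun := fun q => q.re, map_add' := by simp, map_smul' := by simp }
  have h2 : ∑ k ∈ Finset.range (n + 1), (a k).imI ^ 2 ≤
      ∑ k ∈ Finset.range (n + 1), (b k).imI ^ 2 :=
    H { toFun := fun q => q.imI, map_add' := by simp, map_smul' := by simp }
  have h3 : ∑ k ∈ Finset.range (n + 1), (a k).imJ ^ 2 ≤
      ∑ k ∈ Finset.range (n + 1), (b k).imJ ^ 2 :=
    H { toFun := fun q => q.imJ, map_add' := by simp, map_smul' := by simp }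
  have h4 : ∑ k ∈ Finset.range (n + 1), (a k).imK ^ 2 ≤
      ∑ k ∈ Finset.range (n + 1), (b k).imK ^ 2 :=
    H { toFun := fun q => q.imK, map_add' := by simp, map_smul' := by simp }
  have e : ∀ u : ℕ → Quaternion ℝ, u 0 = 0 →
      ∑ k ∈ Finset.Icc 1 n, ‖u k‖ ^ 2 = ∑ k ∈ Finset.range (n + 1), (u k).re ^ 2 +
        ∑ k ∈ Finset.range (n + 1), (u k).imI ^ 2 + ∑ k ∈ Finset.range (n + 1), (u k).imJ ^ 2 +
        ∑ k ∈ Finset.range (n + 1), (u k).imK ^ 2 := by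
    intro u hu
    rw [← Finset.sum_add_distrib, ← Finset.sum_add_distrib, ← Finset.sum_add_distrib]
    have hq : ∀ q : Quaternion ℝ, ‖q‖ ^ 2 = q.re ^ 2 + q.imI ^ 2 + q.imJ ^ 2 + q.imK ^ 2 := by
      intro q
      rw [sq, ← Quaternion.normSq_eq_norm_mul_self, Quaternion.normSq_def']
    simp only [← hq]
    apply Finset.sum_subset
    · intro i; simp
    · intro i hi hi'
      have : i = 0 := by simp at hi hi'; omega
      simp [this, hu]
  rw [e a ha0, e b hb0]
  linarith
end
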